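/- Let Q be an n×n invertible Hermitian complex matrix and b ∈ ℂⁿ. Define b⁺ = ½(I + sign(Q))b and b⁻ = ½(I − sign(Q))b. Then for every polynomial q one has the orthogonal decomposition ‖sign(Q)b − Q q(Q) b‖₂² = ‖b⁺ − Q q(Q) b⁺‖₂² + ‖b⁻ + Q q(Q) b⁻‖₂². -/

import Mathlib

/-!
Since `Q` is invertible, no eigenvalue vanishes, so `S = sign Q` is a Hermitian involution that
commutes with `Q` and hence with `M = Q q(Q)`. The vectors `b⁺` and `b⁻` lie in the eigenspaces of
`S` for `1` and `-1`, with `b = b⁺ + b⁻` and `S b = b⁺ - b⁻`. Put `u = b⁺ - M b⁺` and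
`v = b⁻ + M b⁻`; then `S b - M b = u - v`. As `M` commutes with `S`, also `S u = u` and `S v = -v`,
so `u ⟂ v` because eigenspaces of a Hermitian matrix are orthogonal, and the Pythagorean identity is
the claim.
-/

open Matrix Polynomial

/-- The Euclidean (l2) norm on `ℂⁿ`. -/
noncomputable def e2norm {n : ℕ} (x : Fin n → ℂ) : ℝ :=
  Real.sqrt (∑ i, ‖x i‖ ^ 2)

/-- The square of `e2norm` as a dot product, in which the algebra of the proof takes place. -/
lemma e2norm_sq_eq_dotProduct {n : ℕ} (x : Fin n → ℂ) :
    ((e2norm x ^ 2 : ℝ) : ℂ) = star x ⬝ᵥ x := by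
  rw [e2norm, Real.sq_sqrt (Finset.sum_nonneg fun i _ => sq_nonneg _)]
  simp [dotProduct, Complex.conj_mul']

lemma e2norm_sub_sq_of_dotProduct_eq_zero {n : ℕ} {u v : Fin n → ℂ} (h : star u ⬝ᵥ v = 0) :
    e2norm (u - v) ^ 2 = e2norm u ^ 2 + e2norm v ^ 2 := by
  have h' : star v ⬝ᵥ u = 0 := by rw [star_dotProduct, h, star_zero]
  apply Complex.ofReal_injective
  rw [Complex.ofReal_add]
  simp only [e2norm_sq_eq_dotProduct, star_sub, sub_dotProduct, dotProduct_sub, h, h']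
  ring

lemma dotProduct_eq_zero_of_mulVec_eq_neg {n : ℕ} {S : Matrix (Fin n) (Fin n) ℂ}
    (hS : S.IsHermitian) {u v : Fin n → ℂ} (hu : S *ᵥ u = u) (hv : S *ᵥ v = -v) :
    star u ⬝ᵥ v = 0 := by
  have h : star (S *ᵥ u) ⬝ᵥ v = star u ⬝ᵥ (S *ᵥ v) := by
    rw [star_mulVec, hS.eq, dotProduct_mulVec]
  rw [hu, hv, dotProduct_neg] at h
  exact self_eq_neg.mp h

lemma isHermitian_cfc_real {n : ℕ} {Q : Matrix (Fin n) (Fin n) ℂ} (hQ : Q.IsHermitian)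
    (f : ℝ → ℝ) : (hQ.cfc f).IsHermitian := by
  rw [← hQ.cfc_eq]
  exact (cfc_predicate f Q : IsSelfAdjoint _)

/-- Invertibility is needed here: `Real.sign 0 = 0`, so a zero eigenvalue would spoil `S² = 1`. -/
lemma cfc_sign_mul_self {n : ℕ} {Q : Matrix (Fin n) (Fin n) ℂ} (hQ : Q.IsHermitian)
    (hQinv : IsUnit Q.det) : hQ.cfc Real.sign * hQ.cfc Real.sign = 1 := by
  have hne : ∀ i, hQ.eigenvalues i ≠ 0 := by
    intro i hi
    apply hQinv.ne_zero
    rw [hQ.det_eq_prod_eigenvalues]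
    exact Finset.prod_eq_zero (Finset.mem_univ i) (by simp [hi])
  have hdiag : diagonal (RCLike.ofReal ∘ Real.sign ∘ hQ.eigenvalues) *
      diagonal (RCLike.ofReal ∘ Real.sign ∘ hQ.eigenvalues) =
        (1 : Matrix (Fin n) (Fin n) ℂ) := by
    rw [diagonal_mul_diagonal, ← diagonal_one]
    congr 1
    funext i
    rcases Real.sign_apply_eq_of_ne_zero _ (hne i) with h | h <;> simp [h]
  rw [IsHermitian.cfc, ← map_mul, hdiag, map_one]

lemma commute_cfc_self {n : ℕ} {Q : Matrix (Fin n) (Fin n) ℂ} (hQ : Q.IsHermitian)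
    (f : ℝ → ℝ) : Commute (hQ.cfc f) Q := by
  rw [← hQ.cfc_eq]
  have h := cfc_commute_cfc f id Q
  rwa [cfc_id ℝ Q hQ.isSelfAdjoint] at h

lemma commute_aeval_of_commute {n : ℕ} {S Q : Matrix (Fin n) (Fin n) ℂ} (h : Commute S Q)
    (q : Polynomial ℂ) : Commute S (Polynomial.aeval Q q) := by
  induction q using Polynomial.induction_on' with
  | add p r hp hr => rw [map_add]; exact hp.add_right hr
  | monomial k a =>
    rw [Polynomial.aeval_monomial]
    exact (Algebra.commute_algebraMap_right a S).mul_right (h.pow_right k)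

/-- For an invertible Hermitian `Q`, with `sign Q` the matrix sign function,
`b⁺ = ½(I + sign Q)b` and `b⁻ = ½(I - sign Q)b`, for every polynomial `q` one has the
orthogonal decomposition
`‖sign(Q)b − Q q(Q) b‖² = ‖b⁺ − Q q(Q) b⁺‖² + ‖b⁻ + Q q(Q) b⁻‖²`. -/
theorem sign_error_orthogonal_decomposition {n : ℕ}
    (Q : Matrix (Fin n) (Fin n) ℂ) (hQ : Q.IsHermitian) (hQinv : IsUnit Q.det)
    (b : Fin n → ℂ)
    (signQ : Matrix (Fin n) (Fin n) ℂ) (hsign : signQ = hQ.cfc Real.sign)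
    (bp bm : Fin n → ℂ)
    (hbp : bp = (2 : ℂ)⁻¹ • (((1 : Matrix (Fin n) (Fin n) ℂ) + signQ) *ᵥ b))
    (hbm : bm = (2 : ℂ)⁻¹ • (((1 : Matrix (Fin n) (Fin n) ℂ) - signQ) *ᵥ b))
    (q : Polynomial ℂ) :
    e2norm (signQ *ᵥ b - Q *ᵥ ((Polynomial.aeval Q q) *ᵥ b)) ^ 2 =
      e2norm (bp - Q *ᵥ ((Polynomial.aeval Q q) *ᵥ bp)) ^ 2 +
        e2norm (bm + Q *ᵥ ((Polynomial.aeval Q q) *ᵥ bm)) ^ 2 := by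
  subst hsign
  set S := hQ.cfc Real.sign with hS
  set M := Q * Polynomial.aeval Q q with hM
  have hherm : S.IsHermitian := isHermitian_cfc_real hQ _
  have hsq : S * S = 1 := cfc_sign_mul_self hQ hQinv
  have hcomm : S * M = M * S :=
    (commute_cfc_self hQ Real.sign).mul_right
      (commute_aeval_of_commute (commute_cfc_self hQ Real.sign) q)
  have hSbp : S *ᵥ bp = bp := by
    rw [hbp, mulVec_smul, mulVec_mulVec, mul_add, hsq, mul_one, add_comm]
  have hSbm : S *ᵥ bm = -bm := by
    rw [hbm, mulVec_smul, mulVec_mulVec, mul_sub, hsq, mul_one, ← smul_neg, ← neg_mulVec,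
      neg_sub]
  have hsum : b = bp + bm := by
    rw [hbp, hbm, ← smul_add, ← add_mulVec, add_add_sub_cancel, add_mulVec, one_mulVec,
      ← two_smul ℂ b, smul_smul, inv_mul_cancel₀ two_ne_zero, one_smul]
  simp only [mulVec_mulVec, ← hM]
  have hu : S *ᵥ (bp - M *ᵥ bp) = bp - M *ᵥ bp := by
    rw [mulVec_sub, mulVec_mulVec, hcomm, ← mulVec_mulVec, hSbp]
  have hv : S *ᵥ (bm + M *ᵥ bm) = -(bm + M *ᵥ bm) := by
    rw [mulVec_add, mulVec_mulVec, hcomm, ← mulVec_mulVec, hSbm, mulVec_neg, neg_add]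
  have hdiff : S *ᵥ b - M *ᵥ b = (bp - M *ᵥ bp) - (bm + M *ᵥ bm) := by
    rw [hsum, mulVec_add, mulVec_add, hSbp, hSbm]
    abel
  rw [hdiff]
  exact e2norm_sub_sq_of_dotProduct_eq_zero (dotProduct_eq_zero_of_mulVec_eq_neg hherm hu hv)
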